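/- Let x₁,…,xₙ ∈ ℝ^d and define the negative-type distance matrix A ∈ ℝ^{n×n} by A_{ij} = ‖xᵢ − xⱼ‖₂², the Gram matrix B by B_{ij} = ⟨xᵢ, xⱼ⟩, and the vector v ∈ ℝⁿ by vᵢ = ‖xᵢ‖₂², so that A = v𝟙ᵀ + 𝟙vᵀ − 2B, where 𝟙 is the all-ones vector. Let k ≥ 1 be an integer and ε > 0. Let P ∈ ℝ^{n×n} be an orthogonal projection (P = Pᵀ = P²) with P𝟙 = 𝟙, Pv = v, and ‖B(I − P)‖₂² ≤ (ε/k) · inf{ ‖B − M‖_F² : M ∈ ℝ^{n×n}, rank(M) ≤ k+2 }. Then ‖A − P A_k P‖_F² ≤ (1 + 6ε) · ‖A − A_k‖_F², where A_k is the rank-k spectral truncation of the symmetric matrix A obtained by keeping the k eigenvalues of largest absolute value. -/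

import Mathlib

open Matrix

noncomputable def frobeniusSq {m n : ℕ} (M : Matrix (Fin m) (Fin n) ℝ) : ℝ :=
  ∑ i, ∑ j, (M i j)^2

noncomputable def opNorm2 {m n : ℕ} (M : Matrix (Fin m) (Fin n) ℝ) : ℝ :=
  ‖LinearMap.toContinuousLinearMap (Matrix.toEuclideanLin M)‖

/-!
Write `Q = 1 - P`, let `E` be the spectral projection of `A` onto the retained eigenvectors and
`K = A E`. Expanding around the residual `A - K`,
`‖A - P K P‖² = ‖A - K‖² + 2 ⟨A - K, K - P K P⟩ + ‖K - P K P‖²` in the Frobenius norm. As `A - K`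
and `K` annihilate each other, the cross term is `-2 ⟨(A - K) Q E, Q K⟩`, and by Pythagoras the last
term is at most `‖Q K‖² + ‖K Q‖²`. Each of `(A - K) Q E = (1 - E) A Q E`, `Q K = Q A E` and
`K Q = (Q K)ᴴ` has squared Frobenius norm at most `‖A Q‖₂² ‖E‖² ≤ k ‖A Q‖₂²`, so the excess is at
most `4 k ‖A Q‖₂²`. Finally `A Q = -2 B Q`, because `P` fixes `v` and `𝟙`, and the optimal
rank-`(k + 2)` error of `B` is at most `‖A - K‖² / 4`, because `(v𝟙ᵀ + 𝟙vᵀ - K) / 2` is a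
competitor.
-/

section Rank

theorem rank_add_le_rank_add_rank {m n F : Type*} [Field F] [Fintype n]
    (M N : Matrix m n F) : (M + N).rank ≤ M.rank + N.rank := by
  rw [Matrix.rank, Matrix.rank, Matrix.rank, mulVecLin_add]
  exact (Submodule.finrank_mono (LinearMap.range_add_le _ _)).trans
    (Submodule.finrank_add_le_finrank_add_finrank _ _)

theorem rank_sum_vecMulVec_le {ι m n F : Type*} [Field F] [Fintype n]
    (s : Finset ι) (a : ι → m → F) (b : ι → n → F) :
    (∑ i ∈ s, vecMulVec (a i) (b i)).rank ≤ s.card := by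
  classical
  induction s using Finset.induction_on with
  | empty => simp
  | insert i s hi ih =>
    rw [Finset.sum_insert hi, Finset.card_insert_of_notMem hi, add_comm]
    exact (rank_add_le_rank_add_rank _ _).trans (add_le_add ih (rank_vecMulVec_le _ _))

end Rank

section Frobenius

variable {l m n : ℕ}

theorem frobeniusSq_eq_trace (M : Matrix (Fin m) (Fin n) ℝ) :
    frobeniusSq M = trace (Mᴴ * M) := by
  simp only [frobeniusSq, trace, diag_apply, mul_apply, conjTranspose_apply, star_trivial, sq]
  exact Finset.sum_comm

theorem frobeniusSq_nonneg (M : Matrix (Fin m) (Fin n) ℝ) : 0 ≤ frobeniusSq M :=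
  Finset.sum_nonneg fun _ _ => Finset.sum_nonneg fun _ _ => sq_nonneg _

theorem frobeniusSq_conjTranspose (M : Matrix (Fin m) (Fin n) ℝ) :
    frobeniusSq Mᴴ = frobeniusSq M :=
  Finset.sum_comm

theorem frobeniusSq_smul (c : ℝ) (M : Matrix (Fin m) (Fin n) ℝ) :
    frobeniusSq (c • M) = c ^ 2 * frobeniusSq M := by
  simp only [frobeniusSq, Matrix.smul_apply, smul_eq_mul, mul_pow, Finset.mul_sum]

theorem frobeniusSq_add (M N : Matrix (Fin m) (Fin n) ℝ) :
    frobeniusSq (M + N) = frobeniusSq M + 2 * trace (Mᴴ * N) + frobeniusSq N := by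
  have trace_symm : trace (Nᴴ * M) = trace (Mᴴ * N) := by
    rw [← star_trivial (trace _), ← trace_conjTranspose, conjTranspose_mul,
      conjTranspose_conjTranspose]
  simp only [frobeniusSq_eq_trace, conjTranspose_add, Matrix.add_mul, Matrix.mul_add, trace_add,
    trace_symm]
  ring

theorem neg_two_mul_trace_le_frobeniusSq_add_frobeniusSq (M N : Matrix (Fin m) (Fin n) ℝ) :
    -(2 * trace (Mᴴ * N)) ≤ frobeniusSq M + frobeniusSq N := by
  linarith [frobeniusSq_add M N, frobeniusSq_nonneg (M + N)]

theorem opNorm2_conjTranspose (M : Matrix (Fin m) (Fin n) ℝ) : opNorm2 Mᴴ = opNorm2 M :=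
  l2_opNorm_conjTranspose M

open scoped Matrix.Norms.L2Operator in
theorem opNorm2_smul (c : ℝ) (M : Matrix (Fin m) (Fin n) ℝ) :
    opNorm2 (c • M) = |c| * opNorm2 M :=
  norm_smul c M

theorem sum_mulVec_sq_le (M : Matrix (Fin m) (Fin n) ℝ) (y : Fin n → ℝ) :
    ∑ i, (M *ᵥ y) i ^ 2 ≤ opNorm2 M ^ 2 * ∑ i, y i ^ 2 := by
  have h : ‖WithLp.toLp 2 (M *ᵥ y)‖ ≤ opNorm2 M * ‖WithLp.toLp 2 y‖ :=
    l2_opNorm_mulVec M (WithLp.toLp 2 y)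
  simpa [mul_pow, EuclideanSpace.norm_sq_eq] using pow_le_pow_left₀ (norm_nonneg _) h 2

theorem frobeniusSq_mul_le (M : Matrix (Fin l) (Fin m) ℝ) (N : Matrix (Fin m) (Fin n) ℝ) :
    frobeniusSq (M * N) ≤ opNorm2 M ^ 2 * frobeniusSq N := by
  rw [← frobeniusSq_conjTranspose (M * N), ← frobeniusSq_conjTranspose N, frobeniusSq,
    frobeniusSq, Finset.mul_sum]
  exact Finset.sum_le_sum fun j _ => sum_mulVec_sq_le M fun i => N i j

end Frobenius

section StarProjection

variable {m n : ℕ} {P : Matrix (Fin n) (Fin n) ℝ}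

theorem frobeniusSq_eq_trace_of_isStarProjection (hP : IsStarProjection P) :
    frobeniusSq P = trace P := by
  rw [frobeniusSq_eq_trace, ← star_eq_conjTranspose, hP.isSelfAdjoint.star_eq,
    hP.isIdempotentElem.eq]

theorem frobeniusSq_mul_add_frobeniusSq_one_sub_mul (hP : IsStarProjection P)
    (M : Matrix (Fin n) (Fin m) ℝ) :
    frobeniusSq (P * M) + frobeniusSq ((1 - P) * M) = frobeniusSq M := by
  have hPH : Pᴴ = P := hP.isSelfAdjoint.star_eq
  have orthogonal : trace ((P * M)ᴴ * ((1 - P) * M)) = 0 := by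
    rw [conjTranspose_mul, hPH, Matrix.mul_assoc, ← Matrix.mul_assoc P, hP.mul_one_sub_self,
      Matrix.zero_mul, Matrix.mul_zero, trace_zero]
  have h := frobeniusSq_add (P * M) ((1 - P) * M)
  rw [orthogonal, ← Matrix.add_mul, add_sub_cancel, Matrix.one_mul] at h
  linarith

theorem frobeniusSq_isStarProjection_mul_le (hP : IsStarProjection P)
    (M : Matrix (Fin n) (Fin m) ℝ) : frobeniusSq (P * M) ≤ frobeniusSq M := by
  linarith [frobeniusSq_mul_add_frobeniusSq_one_sub_mul hP M, frobeniusSq_nonneg ((1 - P) * M)]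

theorem frobeniusSq_sub_compression_le (hP : IsStarProjection P) (K : Matrix (Fin n) (Fin n) ℝ) :
    frobeniusSq (K - P * K * P) ≤ frobeniusSq (K * (1 - P)) + frobeniusSq ((1 - P) * K) := by
  have hPP : P * P = P := hP.isIdempotentElem
  have left_part : P * (K - P * K * P) = P * (K * (1 - P)) := by
    rw [mul_sub, ← mul_assoc, ← mul_assoc, hPP]
    noncomm_ring
  have right_part : (1 - P) * (K - P * K * P) = (1 - P) * K := by
    rw [mul_sub, ← mul_assoc, ← mul_assoc, hP.one_sub_mul_self,
      zero_mul, zero_mul, sub_zero]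
  rw [← frobeniusSq_mul_add_frobeniusSq_one_sub_mul hP (K - P * K * P), left_part, right_part]
  gcongr
  exact frobeniusSq_isStarProjection_mul_le hP _

end StarProjection

theorem trace_mul_sub_compression {n R : Type*} [Fintype n] [DecidableEq n] [CommRing R]
    {H K : Matrix n n R} (hHK : H * K = 0) (hKH : K * H = 0) (P : Matrix n n R) :
    trace (H * (K - P * K * P)) = -trace (H * ((1 - P) * K * (1 - P))) := by
  have expand : H * (K - P * K * P) + H * ((1 - P) * K * (1 - P)) =
      H * K + (H * K - H * K * P) - H * P * K := by
    noncomm_ring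
  have cyclic : trace (H * P * K) = 0 := by
    rw [trace_mul_comm, ← mul_assoc, hKH, zero_mul, trace_zero]
  rw [eq_neg_iff_add_eq_zero, ← trace_add, expand, hHK, trace_sub, cyclic]
  simp

section Compression

variable {n : ℕ} {A E P : Matrix (Fin n) (Fin n) ℝ}

theorem trace_residual_mul_sub_compression (hA : A.IsHermitian) (hE : IsStarProjection E)
    (hAE : Commute A E) (hP : IsStarProjection P) :
    trace ((A - A * E)ᴴ * (A * E - P * (A * E) * P)) =
      -trace (((1 - E) * (A * (1 - P) * E))ᴴ * ((1 - P) * (A * E))) := by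
  have hEH : Eᴴ = E := hE.isSelfAdjoint.star_eq
  have hFH : (1 - E)ᴴ = 1 - E := hE.one_sub.isSelfAdjoint.star_eq
  have hQH : (1 - P)ᴴ = 1 - P := hP.one_sub.isSelfAdjoint.star_eq
  have hAF : A * (1 - E) = (1 - E) * A := ((Commute.one_right A).sub_right hAE).eq
  have residual : (A - A * E)ᴴ = A * (1 - E) := by
    rw [← mul_one_sub, conjTranspose_mul, hA.eq, hFH, hAF]
  have residual_mul : A * (1 - E) * (A * E) = 0 := by
    rw [hAE.eq, mul_assoc, ← mul_assoc (1 - E), hE.one_sub_mul_self, zero_mul, mul_zero]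
  have mul_residual : A * E * (A * (1 - E)) = 0 := by
    rw [hAF, mul_assoc, ← mul_assoc E, hE.mul_one_sub_self, zero_mul, mul_zero]
  have cyclic : trace (A * (1 - E) * ((1 - P) * (A * E) * (1 - P))) =
      trace (((1 - E) * (A * (1 - P) * E))ᴴ * ((1 - P) * (A * E))) := by
    simp only [conjTranspose_mul, hEH, hFH, hQH, hA.eq]
    rw [← mul_assoc, trace_mul_comm, mul_assoc E, mul_assoc E, trace_mul_comm E]
    simp only [mul_assoc, hE.isIdempotentElem.eq]
  rw [residual, trace_mul_sub_compression residual_mul mul_residual, cyclic]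

theorem frobeniusSq_sub_compression_le_add (hA : A.IsHermitian) (hE : IsStarProjection E)
    (hAE : Commute A E) (hP : IsStarProjection P) :
    frobeniusSq (A - P * (A * E) * P) ≤
      frobeniusSq (A - A * E) + 4 * (opNorm2 (A * (1 - P)) ^ 2 * frobeniusSq E) := by
  have hEH : Eᴴ = E := hE.isSelfAdjoint.star_eq
  have hQH : (1 - P)ᴴ = 1 - P := hP.one_sub.isSelfAdjoint.star_eq
  have hQA : (A * (1 - P))ᴴ = (1 - P) * A := by rw [conjTranspose_mul, hA.eq, hQH]
  have left_bound : frobeniusSq ((1 - P) * (A * E)) ≤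
      opNorm2 (A * (1 - P)) ^ 2 * frobeniusSq E := by
    rw [← opNorm2_conjTranspose, hQA, ← mul_assoc]
    exact frobeniusSq_mul_le _ _
  have right_bound : frobeniusSq (A * E * (1 - P)) ≤
      opNorm2 (A * (1 - P)) ^ 2 * frobeniusSq E := by
    rwa [← frobeniusSq_conjTranspose, conjTranspose_mul, conjTranspose_mul, hQH, hEH, hA.eq,
      ← hAE.eq]
  have cross_bound : frobeniusSq ((1 - E) * (A * (1 - P) * E)) ≤
      opNorm2 (A * (1 - P)) ^ 2 * frobeniusSq E :=
    (frobeniusSq_isStarProjection_mul_le hE.one_sub _).trans (frobeniusSq_mul_le _ _)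
  have expand := frobeniusSq_add (A - A * E) (A * E - P * (A * E) * P)
  rw [sub_add_sub_cancel, trace_residual_mul_sub_compression hA hE hAE hP] at expand
  linarith [frobeniusSq_sub_compression_le hP (A * E),
    neg_two_mul_trace_le_frobeniusSq_add_frobeniusSq ((1 - E) * (A * (1 - P) * E))
      ((1 - P) * (A * E))]

end Compression

section SpectralSum

variable {ι n R : Type*}

/-- The matrix `∑ i ∈ s, lam i • u i (u i)ᵀ`: for orthonormal `u`, the part of the symmetric matrix
with eigenpairs `(lam i, u i)` that is carried by the eigenpairs in `s`. With `lam = 1` it is the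
orthogonal projection onto the span of the `u i` with `i ∈ s`. -/
def spectralSum [CommSemiring R] (lam : ι → R) (u : ι → n → R) (s : Finset ι) : Matrix n n R :=
  ∑ i ∈ s, lam i • vecMulVec (u i) (u i)

theorem spectralSum_mul_spectralSum [Fintype n] [DecidableEq ι] [CommSemiring R] {u : ι → n → R}
    (hu : ∀ i j, u i ⬝ᵥ u j = if i = j then 1 else 0) (a b : ι → R) (s t : Finset ι) :
    spectralSum a u s * spectralSum b u t = spectralSum (a * b) u (s ∩ t) := by
  have term (i j : ι) : a i • vecMulVec (u i) (u i) * b j • vecMulVec (u j) (u j) =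
      if i = j then (a * b) i • vecMulVec (u i) (u i) else 0 := by
    rw [smul_mul_smul_comm, vecMulVec_mul_vecMulVec, hu]
    split_ifs with h
    · subst h
      simp
    · simp
  simp only [spectralSum, Finset.sum_mul_sum, term, Finset.sum_ite_eq, Finset.sum_ite_mem]

theorem spectralSum_isHermitian (lam : ι → ℝ) (u : ι → n → ℝ) (s : Finset ι) :
    (spectralSum lam u s).IsHermitian := by
  rw [Matrix.IsHermitian, spectralSum, conjTranspose_sum]
  simp [transpose_vecMulVec]

theorem spectralSum_one_isStarProjection [Fintype n] [DecidableEq ι] {u : ι → n → ℝ}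
    (hu : ∀ i j, u i ⬝ᵥ u j = if i = j then 1 else 0) (s : Finset ι) :
    IsStarProjection (spectralSum 1 u s) where
  isIdempotentElem := by
    rw [IsIdempotentElem, spectralSum_mul_spectralSum hu, Finset.inter_self, mul_one]
  isSelfAdjoint := spectralSum_isHermitian 1 u s

theorem trace_spectralSum_one [Fintype n] [DecidableEq ι] [CommSemiring R] {u : ι → n → R}
    (hu : ∀ i j, u i ⬝ᵥ u j = if i = j then 1 else 0) (s : Finset ι) :
    trace (spectralSum 1 u s) = s.card := by
  simp [spectralSum, trace_sum, trace_vecMulVec, hu]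

theorem rank_spectralSum_le [Fintype n] [Field R] (lam : ι → R) (u : ι → n → R) (s : Finset ι) :
    (spectralSum lam u s).rank ≤ s.card := by
  simp only [spectralSum, ← smul_vecMulVec]
  exact rank_sum_vecMulVec_le s _ u

theorem frobeniusSq_spectralSum_sub_compression_le {n : ℕ} [Fintype ι] [DecidableEq ι]
    {u : ι → Fin n → ℝ} (hu : ∀ i j, u i ⬝ᵥ u j = if i = j then 1 else 0) (lam : ι → ℝ)
    (s : Finset ι) {P : Matrix (Fin n) (Fin n) ℝ} (hP : IsStarProjection P) :
    frobeniusSq (spectralSum lam u .univ - P * spectralSum lam u s * P) ≤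
      frobeniusSq (spectralSum lam u .univ - spectralSum lam u s) +
        4 * (opNorm2 (spectralSum lam u .univ * (1 - P)) ^ 2 * s.card) := by
  have hE := spectralSum_one_isStarProjection hu s
  have right_proj : spectralSum lam u .univ * spectralSum 1 u s = spectralSum lam u s := by
    rw [spectralSum_mul_spectralSum hu, mul_one, Finset.univ_inter]
  have left_proj : spectralSum 1 u s * spectralSum lam u .univ = spectralSum lam u s := by
    rw [spectralSum_mul_spectralSum hu, one_mul, Finset.inter_univ]
  rw [← trace_spectralSum_one hu s, ← frobeniusSq_eq_trace_of_isStarProjection hE, ← right_proj]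
  exact frobeniusSq_sub_compression_le_add (spectralSum_isHermitian lam u .univ) hE
    (right_proj.trans left_proj.symm) hP

end SpectralSum

section LowRankError

/-- The squared Frobenius distance from `B` to the matrices of rank at most `r`. The set of
competitors is nonempty and bounded below by `0`, so the infimum takes no junk value. -/
noncomputable def lowRankErrorSq {m n : ℕ} (B : Matrix (Fin m) (Fin n) ℝ) (r : ℕ) : ℝ :=
  sInf {t : ℝ | ∃ M : Matrix (Fin m) (Fin n) ℝ, M.rank ≤ r ∧ t = frobeniusSq (B - M)}

theorem lowRankErrorSq_le {m n r : ℕ} (B : Matrix (Fin m) (Fin n) ℝ)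
    {M : Matrix (Fin m) (Fin n) ℝ} (hM : M.rank ≤ r) :
    lowRankErrorSq B r ≤ frobeniusSq (B - M) := by
  refine csInf_le ⟨0, ?_⟩ ⟨M, hM, rfl⟩
  rintro _ ⟨N, -, rfl⟩
  exact frobeniusSq_nonneg _

theorem sq_mul_lowRankErrorSq_add_le {m n r k : ℕ} {c : ℝ}
    {A B L K : Matrix (Fin m) (Fin n) ℝ} (hA : A = L + c • B) (hL : L.rank ≤ r) (hK : K.rank ≤ k) :
    c ^ 2 * lowRankErrorSq B (k + r) ≤ frobeniusSq (A - K) := by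
  obtain rfl | hc := eq_or_ne c 0
  · simpa using frobeniusSq_nonneg (A - K)
  have competitor_rank : (c⁻¹ • (K + (-1 : ℝ) • L)).rank ≤ k + r := by
    rw [rank_smul_of_mem_nonZeroDivisors _ (mem_nonZeroDivisors_of_ne_zero (inv_ne_zero hc))]
    refine (rank_add_le_rank_add_rank _ _).trans (add_le_add hK ?_)
    rwa [rank_smul_of_mem_nonZeroDivisors _ (mem_nonZeroDivisors_of_ne_zero (by norm_num))]
  have residual : A - K = c • (B - c⁻¹ • (K + (-1 : ℝ) • L)) := by
    rw [smul_sub, smul_inv_smul₀ hc, hA]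
    module
  rw [residual, frobeniusSq_smul]
  gcongr
  exact lowRankErrorSq_le B competitor_rank

end LowRankError

section RankTwo

variable {n R : Type*} [CommRing R]

theorem rank_vecMulVec_add_vecMulVec_le {F : Type*} [Field F] [Fintype n] (v w : n → F) :
    (vecMulVec v w + vecMulVec w v).rank ≤ 2 :=
  (rank_add_le_rank_add_rank _ _).trans
    (add_le_add (rank_vecMulVec_le v w) (rank_vecMulVec_le w v))

theorem vecMulVec_add_vecMulVec_mul_of_fixed [Fintype n] {P : Matrix n n R} (hP : P.IsSymm)
    {v w : n → R} (hv : P *ᵥ v = v) (hw : P *ᵥ w = w) :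
    (vecMulVec v w + vecMulVec w v) * P = vecMulVec v w + vecMulVec w v := by
  rw [Matrix.add_mul, vecMulVec_mul, vecMulVec_mul, ← mulVec_transpose, ← mulVec_transpose, hP.eq,
    hv, hw]

theorem sqDist_eq_vecMulVec_add_vecMulVec_add {d : Type*} [Fintype d] {x : n → d → R}
    {A B : Matrix n n R} {v : n → R} (hA : ∀ i j, A i j = ∑ l, (x i l - x j l) ^ 2)
    (hB : ∀ i j, B i j = ∑ l, x i l * x j l) (hv : ∀ i, v i = ∑ l, x i l ^ 2) :
    A = vecMulVec v (fun _ => 1) + vecMulVec (fun _ => 1) v + (-2 : R) • B := by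
  ext i j
  simp only [Matrix.add_apply, Matrix.smul_apply, vecMulVec_apply, hA, hB, hv, smul_eq_mul,
    mul_one, one_mul, Finset.mul_sum, ← Finset.sum_add_distrib]
  exact Finset.sum_congr rfl fun l _ => by ring

end RankTwo

theorem sf_projection_distance_matrix_general {n : ℕ} {ι : Type*} [Fintype ι] [DecidableEq ι]
    {A B L : Matrix (Fin n) (Fin n) ℝ} {r : ℕ} {c : ℝ} (hA : A = L + c • B) (hL : L.rank ≤ r)
    {k : ℕ} (hk : 1 ≤ k) {ε : ℝ} (hε : 0 ≤ ε) {lam : ι → ℝ} {u : ι → Fin n → ℝ}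
    (hu : ∀ i j, u i ⬝ᵥ u j = if i = j then 1 else 0) (hAeig : A = spectralSum lam u .univ)
    {s : Finset ι} (hs : s.card ≤ k) {K : Matrix (Fin n) (Fin n) ℝ} (hK : K = spectralSum lam u s)
    {P : Matrix (Fin n) (Fin n) ℝ} (hP : IsStarProjection P) (hLP : L * P = L)
    (hspec : opNorm2 (B * (1 - P)) ^ 2 ≤ ε / k * lowRankErrorSq B (k + r)) :
    frobeniusSq (A - P * K * P) ≤ (1 + 4 * ε) * frobeniusSq (A - K) := by
  have hAQ : A * (1 - P) = c • (B * (1 - P)) := by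
    rw [hA, add_mul, mul_one_sub, hLP, sub_self, zero_add, Matrix.smul_mul]
  have opNorm_bound : opNorm2 (A * (1 - P)) ^ 2 * k ≤ ε * frobeniusSq (A - K) := calc
    opNorm2 (A * (1 - P)) ^ 2 * k = c ^ 2 * opNorm2 (B * (1 - P)) ^ 2 * k := by
      rw [hAQ, opNorm2_smul, mul_pow, sq_abs]
    _ ≤ c ^ 2 * (ε / k * lowRankErrorSq B (k + r)) * k := by gcongr
    _ = ε * (c ^ 2 * lowRankErrorSq B (k + r)) := by field_simp
    _ ≤ ε * frobeniusSq (A - K) := by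
      gcongr
      exact sq_mul_lowRankErrorSq_add_le hA hL (hK ▸ (rank_spectralSum_le lam u s).trans hs)
  calc frobeniusSq (A - P * K * P)
      ≤ frobeniusSq (A - K) + 4 * (opNorm2 (A * (1 - P)) ^ 2 * s.card) :=
        hAeig ▸ hK ▸ frobeniusSq_spectralSum_sub_compression_le hu lam s hP
    _ ≤ frobeniusSq (A - K) + 4 * (opNorm2 (A * (1 - P)) ^ 2 * k) := by gcongr
    _ ≤ (1 + 4 * ε) * frobeniusSq (A - K) := by linarith

/-- Structured projections for negative-type distance matrices. -/
theorem sf_projection_distance_matrix {n d : ℕ} (x : Fin n → (Fin d → ℝ))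
    (A B : Matrix (Fin n) (Fin n) ℝ) (v : Fin n → ℝ)
    (hAdef : ∀ i j, A i j = ∑ l, (x i l - x j l)^2)
    (hBdef : ∀ i j, B i j = ∑ l, (x i l) * (x j l))
    (hvdef : ∀ i, v i = ∑ l, (x i l)^2)
    (k : ℕ) (hk : 1 ≤ k) (ε : ℝ) (hε : 0 < ε)
    (lam : Fin n → ℝ) (u : Fin n → (Fin n → ℝ))
    (hmono : Antitone (fun i => |lam i|))
    (hortho : ∀ i j, u i ⬝ᵥ u j = if i = j then (1:ℝ) else 0)
    (hAeig : A = ∑ i, lam i • Matrix.vecMulVec (u i) (u i))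
    (Ak : Matrix (Fin n) (Fin n) ℝ)
    (hAk : Ak = ∑ i ∈ Finset.univ.filter (fun i : Fin n => (i : ℕ) < k),
      lam i • Matrix.vecMulVec (u i) (u i))
    (P : Matrix (Fin n) (Fin n) ℝ) (hPsymm : Pᵀ = P) (hPproj : P * P = P)
    (hPone : P.mulVec (fun _ => 1) = fun _ => 1) (hPv : P.mulVec v = v)
    (hspec : (opNorm2 (B * (1 - P)))^2 ≤ (ε / k) *
      sInf {r : ℝ | ∃ M : Matrix (Fin n) (Fin n) ℝ, M.rank ≤ k + 2 ∧ r = frobeniusSq (B - M)}) :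
    frobeniusSq (A - P * Ak * P) ≤ (1 + 6 * ε) * frobeniusSq (A - Ak) := by
  have hcard : (Finset.univ.filter fun i : Fin n => (i : ℕ) < k).card ≤ k := by
    simp [Fin.card_filter_val_lt]
  exact (sf_projection_distance_matrix_general
    (sqDist_eq_vecMulVec_add_vecMulVec_add hAdef hBdef hvdef)
    (rank_vecMulVec_add_vecMulVec_le v _) hk hε.le hortho hAeig hcard hAk ⟨hPproj, hPsymm⟩
    (vecMulVec_add_vecMulVec_mul_of_fixed hPsymm hPv hPone) hspec).trans
      (mul_le_mul_of_nonneg_right (by linarith) (frobeniusSq_nonneg _))
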